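/- (Estimating equations for the pseudo minimum phi-divergence estimator.) Let φ : (0,∞) → ℝ be differentiable and assume all counts ŷ_{his} are strictly positive. Then for every 1 ≤ l ≤ k and 1 ≤ r ≤ d, ∂/∂β_{lr} d_φ(p̂, π(β)) = −(1/τ) Σ_{h=1}^H Σ_{i=1}^{n_h} w_{hi} m_{hi} x_{hil} Σ_{s=1}^{d+1} f_φ(ŷ_{his}/m_{hi}, π_{his}(β)) (δ_{rs} π_{hir}(β) − π_{hir}(β) π_{his}(β)), where δ_{rs} = 1 if r = s and 0 otherwise. Hence the pseudo minimum phi-divergence estimator solves u_φ(β) = 0 with u_φ(β) = Σ_h Σ_i (w_{hi} m_{hi}/φ''(1)) Δ(π*_{hi}(β)) f*_{φ,hi}(ŷ_{hi}/m_{hi}, β) ⊗ x_{hi}. -/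

import Mathlib

/-- Multinomial logistic probabilities for a cluster with covariate vector `x`. -/
noncomputable def mlogit {k d : ℕ} (x : Fin k → ℝ) (β : Fin d → Fin k → ℝ) :
    Fin (d + 1) → ℝ := fun r =>
  if h : (r : ℕ) < d then
    Real.exp (∑ l, x l * β ⟨(r : ℕ), h⟩ l) / (1 + ∑ s, Real.exp (∑ l, x l * β s l))
  else
    1 / (1 + ∑ s, Real.exp (∑ l, x l * β s l))

/-- `f_φ(x, π) = (x/π) φ'(x/π) − φ(x/π)`. -/
noncomputable def fdiv (φ : ℝ → ℝ) (x p : ℝ) : ℝ :=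
  x / p * deriv φ (x / p) - φ (x / p)

/-! Along any differentiable curve of parameters the log-odds `η_s = x ⬝ᵥ β_s` have derivative
`η'_s = x ⬝ᵥ β'_s`, and the softmax map has derivative `Δ(π)`, so the probabilities move by
`Δ(π) η'`. Since `d/dq (q φ(p / q)) = -f_φ(p, q)`, the chain rule gives the derivative of the
divergence; in the direction `β_{lr}` the vector `η'` has the single nonzero entry `x_l`, at `r`,
which selects one column of the symmetric matrix `Δ(π)`. The estimating equations are Fermat's
first-order condition. -/

open scoped Matrix

theorem hasDerivAt_update_update {ι κ : Type*} [Finite ι] [DecidableEq ι] [Finite κ]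
    [DecidableEq κ] (β : ι → κ → ℝ) (r : ι) (l : κ) (t : ℝ) :
    HasDerivAt (fun u => Function.update β r (Function.update (β r) l u))
      (Pi.single r (Pi.single l 1)) t := by
  have := Fintype.ofFinite ι
  have := Fintype.ofFinite κ
  rw [hasDerivAt_pi]
  intro s
  rcases eq_or_ne s r with rfl | hsr
  · simpa only [Function.update_self, Pi.single_eq_same] using hasDerivAt_update (β s) l t
  · simpa only [Function.update_of_ne hsr, Pi.single_eq_of_ne hsr] using
      hasDerivAt_const t (β s)

section MultinomialCov

variable {ι : Type*} [DecidableEq ι]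

/-- The covariance matrix `Δ(p) = diag(p) - p pᵀ` of a single multinomial trial with
probabilities `p`. -/
def multinomialCov (p : ι → ℝ) : Matrix ι ι ℝ :=
  Matrix.diagonal p - Matrix.vecMulVec p p

theorem isSymm_multinomialCov (p : ι → ℝ) : (multinomialCov p).IsSymm :=
  (Matrix.isSymm_diagonal p).sub (Matrix.transpose_vecMulVec p p)

theorem multinomialCov_mulVec_apply [Fintype ι] (p v : ι → ℝ) (s : ι) :
    (multinomialCov p *ᵥ v) s = p s * (v s - p ⬝ᵥ v) := by
  simp [multinomialCov, Matrix.sub_mulVec, Matrix.mulVec_diagonal, Matrix.vecMulVec_mulVec,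
    mul_sub, mul_comm]

end MultinomialCov

section Softmax

variable {ι : Type*} [Fintype ι]

/-- The softmax map, which turns log-odds `η` (up to a common additive constant) into
probabilities. -/
noncomputable def softmax (η : ι → ℝ) (s : ι) : ℝ :=
  Real.exp (η s) / ∑ q, Real.exp (η q)

theorem sum_exp_pos [Nonempty ι] (η : ι → ℝ) : 0 < ∑ q, Real.exp (η q) :=
  Finset.sum_pos (fun q _ => Real.exp_pos (η q)) Finset.univ_nonempty

theorem softmax_pos (η : ι → ℝ) (s : ι) : 0 < softmax η s :=
  have : Nonempty ι := ⟨s⟩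
  div_pos (Real.exp_pos (η s)) (sum_exp_pos η)

theorem hasDerivAt_softmax [DecidableEq ι] {η : ℝ → ι → ℝ} {η' : ι → ℝ} {t : ℝ}
    (hη : HasDerivAt η η' t) :
    HasDerivAt (fun u => softmax (η u)) (multinomialCov (softmax (η t)) *ᵥ η') t := by
  rw [hasDerivAt_pi]
  intro s
  have : Nonempty ι := ⟨s⟩
  have hexp (q : ι) : HasDerivAt (fun u => Real.exp (η u q)) (Real.exp (η t q) * η' q) t :=
    (hasDerivAt_pi.1 hη q).exp
  have hne : ∑ q, Real.exp (η t q) ≠ 0 := (sum_exp_pos (η t)).ne'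
  refine ((hexp s).fun_div (HasDerivAt.fun_sum fun q _ => hexp q) hne).congr_deriv ?_
  simp only [multinomialCov_mulVec_apply, softmax, dotProduct, div_mul_eq_mul_div,
    ← Finset.sum_div]
  field_simp

end Softmax

section Mlogit

variable {k d : ℕ}

/-- The log-odds of the categories relative to the last one, which has log-odds `0`. -/
def logit (x : Fin k → ℝ) (β : Fin d → Fin k → ℝ) : Fin (d + 1) → ℝ :=
  Fin.snoc (fun r => x ⬝ᵥ β r) 0

theorem mlogit_eq_softmax_logit (x : Fin k → ℝ) (β : Fin d → Fin k → ℝ) :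
    mlogit x β = softmax (logit x β) := by
  funext s
  induction s using Fin.lastCases <;>
    simp [mlogit, softmax, logit, dotProduct, Fin.sum_univ_castSucc, add_comm]

theorem mlogit_pos (x : Fin k → ℝ) (β : Fin d → Fin k → ℝ) (s : Fin (d + 1)) :
    0 < mlogit x β s := by
  rw [mlogit_eq_softmax_logit]
  exact softmax_pos _ s

theorem hasDerivAt_logit (x : Fin k → ℝ) {β : ℝ → Fin d → Fin k → ℝ} {β' : Fin d → Fin k → ℝ}
    {t : ℝ} (hβ : HasDerivAt β β' t) :
    HasDerivAt (fun u => logit x (β u)) (logit x β') t := by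
  rw [hasDerivAt_pi]
  intro s
  induction s using Fin.lastCases with
  | last => simpa [logit] using hasDerivAt_const t (0 : ℝ)
  | cast r =>
    simp only [logit, Fin.snoc_castSucc]
    exact HasDerivAt.fun_sum fun l _ =>
      (hasDerivAt_pi.1 (hasDerivAt_pi.1 hβ r) l).const_mul (x l)

theorem hasDerivAt_mlogit (x : Fin k → ℝ) {β : ℝ → Fin d → Fin k → ℝ} {β' : Fin d → Fin k → ℝ}
    {t : ℝ} (hβ : HasDerivAt β β' t) :
    HasDerivAt (fun u => mlogit x (β u)) (multinomialCov (mlogit x (β t)) *ᵥ logit x β') t := by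
  simp only [mlogit_eq_softmax_logit]
  exact hasDerivAt_softmax (hasDerivAt_logit x hβ)

theorem logit_single_single (x : Fin k → ℝ) (l : Fin k) (r : Fin d) :
    logit x (Pi.single r (Pi.single l 1)) = Pi.single r.castSucc (x l) := by
  funext s
  induction s using Fin.lastCases with
  | last => simp [logit, Pi.single_apply, (Fin.castSucc_lt_last r).ne']
  | cast q => by_cases hqr : q = r <;> simp [logit, Pi.single_apply, hqr]

end Mlogit

section PhiDivergence

theorem hasDerivAt_mul_comp_div {φ : ℝ → ℝ} {c p : ℝ} (hp : p ≠ 0)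
    (hφ : DifferentiableAt ℝ φ (c / p)) :
    HasDerivAt (fun q => q * φ (c / q)) (-fdiv φ c p) p := by
  have hdiv : HasDerivAt (fun q => c / q) (-c / p ^ 2) p := by
    simpa using (hasDerivAt_const p c).fun_div (hasDerivAt_id' p) hp
  refine ((hasDerivAt_id' p).fun_mul (hφ.hasDerivAt.comp p hdiv)).congr_deriv ?_
  simp only [fdiv, Function.comp_apply]
  field_simp
  ring

variable {ι : Type*} [Fintype ι]

/-- The phi-divergence of `p` from `q`, two vectors of probabilities. -/
noncomputable def phiDivergence (φ : ℝ → ℝ) (p q : ι → ℝ) : ℝ :=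
  ∑ s, q s * φ (p s / q s)

theorem hasDerivAt_phiDivergence {φ : ℝ → ℝ} {p : ι → ℝ} {q : ℝ → ι → ℝ} {q' : ι → ℝ} {t : ℝ}
    (hq : HasDerivAt q q' t) (hq₀ : ∀ s, q t s ≠ 0)
    (hφ : ∀ s, DifferentiableAt ℝ φ (p s / q t s)) :
    HasDerivAt (fun u => phiDivergence φ p (q u))
      (-∑ s, fdiv φ (p s) (q t s) * q' s) t := by
  simp only [← Finset.sum_neg_distrib, ← neg_mul]
  exact HasDerivAt.fun_sum fun s _ =>
    HasDerivAt.comp (h₂ := fun v => v * φ (p s / v)) t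
      (hasDerivAt_mul_comp_div (hq₀ s) (hφ s)) (hasDerivAt_pi.1 hq s)

end PhiDivergence

section Estimation

variable {ι : Type*} [Fintype ι] {κ : ι → Type*} [∀ h, Fintype (κ h)] {k d : ℕ}

/-- The total `τ` of the weighted cluster sizes. Throughout, `ι` indexes the strata and `κ h` the
clusters of stratum `h`. -/
def weightedTotal (y : ∀ h, κ h → Fin (d + 1) → ℝ) (w : ∀ h, κ h → ℝ) : ℝ :=
  ∑ h, ∑ i, w h i * ∑ s, y h i s

/-- The phi-divergence `d_φ(p̂, π(β))` between the weighted cluster proportions and the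
multinomial logistic probabilities, which the pseudo minimum phi-divergence estimator
minimizes. -/
noncomputable def pseudoPhiDivergence (φ : ℝ → ℝ) (y : ∀ h, κ h → Fin (d + 1) → ℝ)
    (x : ∀ h, κ h → Fin k → ℝ) (w : ∀ h, κ h → ℝ) (β : Fin d → Fin k → ℝ) : ℝ :=
  (1 / weightedTotal y w) * ∑ h, ∑ i, w h i * (∑ s, y h i s) *
    ∑ s, mlogit (x h i) β s * φ (y h i s / ((∑ q, y h i q) * mlogit (x h i) β s))

/-- The `(l, r)` entry of the estimating function `u_φ(β)`, without the constant `1 / φ''(1)`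
by which `u_φ` is conventionally normalized. -/
noncomputable def estimatingFunction (φ : ℝ → ℝ) (y : ∀ h, κ h → Fin (d + 1) → ℝ)
    (x : ∀ h, κ h → Fin k → ℝ) (w : ∀ h, κ h → ℝ) (β : Fin d → Fin k → ℝ) (l : Fin k)
    (r : Fin d) : ℝ :=
  ∑ h, ∑ i, w h i * (∑ s, y h i s) * x h i l *
    ∑ s, fdiv φ (y h i s / ∑ q, y h i q) (mlogit (x h i) β s) *
      multinomialCov (mlogit (x h i) β) r.castSucc s

variable {φ : ℝ → ℝ} {y : ∀ h, κ h → Fin (d + 1) → ℝ} {w : ∀ h, κ h → ℝ}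

theorem isEmpty_or_weightedTotal_ne_zero (hw : ∀ h i, 0 < w h i) (hy : ∀ h i s, 0 < y h i s) :
    IsEmpty (Σ h, κ h) ∨ weightedTotal y w ≠ 0 := by
  rcases isEmpty_or_nonempty (Σ h, κ h) with hempty | hnonempty
  · exact .inl hempty
  refine .inr (ne_of_gt ?_)
  rw [weightedTotal, ← Fintype.sum_sigma']
  exact Finset.sum_pos (fun c _ => mul_pos (hw c.1 c.2)
    (Finset.sum_pos (fun s _ => hy c.1 c.2 s) Finset.univ_nonempty)) Finset.univ_nonempty

theorem pseudoPhiDivergence_eq (φ : ℝ → ℝ) (y : ∀ h, κ h → Fin (d + 1) → ℝ)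
    (x : ∀ h, κ h → Fin k → ℝ) (w : ∀ h, κ h → ℝ) (β : Fin d → Fin k → ℝ) :
    pseudoPhiDivergence φ y x w β =
      (1 / weightedTotal y w) * ∑ h, ∑ i, w h i * (∑ s, y h i s) *
        phiDivergence φ (fun s => y h i s / ∑ q, y h i q) (mlogit (x h i) β) := by
  simp only [pseudoPhiDivergence, phiDivergence, div_div]

theorem hasDerivAt_pseudoPhiDivergence (hy : ∀ h i s, 0 < y h i s)
    (hφ : ∀ t > (0 : ℝ), DifferentiableAt ℝ φ t) (x : ∀ h, κ h → Fin k → ℝ) (w : ∀ h, κ h → ℝ)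
    {β : ℝ → Fin d → Fin k → ℝ} {β' : Fin d → Fin k → ℝ} {t : ℝ} (hβ : HasDerivAt β β' t) :
    HasDerivAt (fun u => pseudoPhiDivergence φ y x w (β u))
      (-(1 / weightedTotal y w) * ∑ h, ∑ i, w h i * (∑ s, y h i s) *
        ∑ s, fdiv φ (y h i s / ∑ q, y h i q) (mlogit (x h i) (β t) s) *
          (multinomialCov (mlogit (x h i) (β t)) *ᵥ logit (x h i) β') s) t := by
  have hratio (h : ι) (i : κ h) (s : Fin (d + 1)) :
      0 < y h i s / (∑ q, y h i q) / mlogit (x h i) (β t) s :=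
    div_pos (div_pos (hy h i s) (Finset.sum_pos (fun q _ => hy h i q) Finset.univ_nonempty))
      (mlogit_pos (x h i) (β t) s)
  have hcluster (h : ι) (i : κ h) := hasDerivAt_phiDivergence (hasDerivAt_mlogit (x h i) hβ)
    (fun s => (mlogit_pos (x h i) (β t) s).ne') (fun s => hφ _ (hratio h i s))
  simp only [pseudoPhiDivergence_eq]
  refine ((HasDerivAt.fun_sum fun h _ => HasDerivAt.fun_sum fun i _ =>
    (hcluster h i).const_mul _).const_mul _).congr_deriv ?_
  simp only [mul_neg, neg_mul, Finset.sum_neg_distrib]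

theorem hasDerivAt_pseudoPhiDivergence_update (hy : ∀ h i s, 0 < y h i s)
    (hφ : ∀ t > (0 : ℝ), DifferentiableAt ℝ φ t) (x : ∀ h, κ h → Fin k → ℝ) (w : ∀ h, κ h → ℝ)
    (β : Fin d → Fin k → ℝ) (l : Fin k) (r : Fin d) :
    HasDerivAt
      (fun t => pseudoPhiDivergence φ y x w (Function.update β r (Function.update (β r) l t)))
      (-(1 / weightedTotal y w) * estimatingFunction φ y x w β l r) (β r l) := by
  refine (hasDerivAt_pseudoPhiDivergence hy hφ x w
    (hasDerivAt_update_update β r l _)).congr_deriv ?_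
  simp only [estimatingFunction, Function.update_eq_self, logit_single_single,
    Matrix.mulVec_single, Finset.mul_sum, Pi.smul_apply, Matrix.col_apply,
    MulOpposite.smul_eq_mul_unop, MulOpposite.unop_op]
  refine Finset.sum_congr rfl fun h _ => Finset.sum_congr rfl fun i _ =>
    Finset.sum_congr rfl fun s _ => ?_
  rw [(isSymm_multinomialCov _).apply]
  ring

theorem estimatingFunction_eq_zero_of_isLocalExtr (hy : ∀ h i s, 0 < y h i s)
    (hφ : ∀ t > (0 : ℝ), DifferentiableAt ℝ φ t) {x : ∀ h, κ h → Fin k → ℝ}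
    (hτ : weightedTotal y w ≠ 0) {β : Fin d → Fin k → ℝ}
    (hβ : IsLocalExtr (pseudoPhiDivergence φ y x w) β) (l : Fin k) (r : Fin d) :
    estimatingFunction φ y x w β l r = 0 := by
  let line : ℝ → Fin d → Fin k → ℝ := fun t => Function.update β r (Function.update (β r) l t)
  have hline : line (β r l) = β := by simp only [line, Function.update_eq_self]
  have hextr : IsLocalExtr (pseudoPhiDivergence φ y x w ∘ line) (β r l) :=
    (hline.symm ▸ hβ : IsLocalExtr _ (line (β r l))).comp_continuous
      (hasDerivAt_update_update β r l (β r l)).continuousAt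
  have hzero := hextr.hasDerivAt_eq_zero (hasDerivAt_pseudoPhiDivergence_update hy hφ x w β l r)
  exact (mul_eq_zero.1 hzero).resolve_left (neg_ne_zero.2 (one_div_ne_zero hτ))

theorem stmt8_general (hy : ∀ h i s, 0 < y h i s) (hφ : ∀ t > (0 : ℝ), DifferentiableAt ℝ φ t)
    (x : ∀ h, κ h → Fin k → ℝ) (hτ : IsEmpty (Σ h, κ h) ∨ weightedTotal y w ≠ 0) :
    (∀ (β : Fin d → Fin k → ℝ) (l : Fin k) (r : Fin d),
      HasDerivAt
        (fun t => pseudoPhiDivergence φ y x w (Function.update β r (Function.update (β r) l t)))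
        (-(1 / weightedTotal y w) * estimatingFunction φ y x w β l r) (β r l)) ∧
    (∀ β : Fin d → Fin k → ℝ, IsLocalExtr (pseudoPhiDivergence φ y x w) β →
      ∀ (l : Fin k) (r : Fin d), estimatingFunction φ y x w β l r = 0) := by
  refine ⟨hasDerivAt_pseudoPhiDivergence_update hy hφ x w, fun β hβ l r => ?_⟩
  rcases hτ with hempty | hτ
  · rw [estimatingFunction, ← Fintype.sum_sigma']
    exact Fintype.sum_empty _
  · exact estimatingFunction_eq_zero_of_isLocalExtr hy hφ hτ hβ l r

end Estimation

/-- Estimating equations for the pseudo minimum phi-divergence estimator.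
For differentiable `φ` and strictly positive counts,
`∂/∂β_{lr} d_φ(p̂, π(β)) = −(1/τ) ∑_h ∑_i w_{hi} m_{hi} x_{hil}
  ∑_{s=1}^{d+1} f_φ(ŷ_{his}/m_{hi}, π_{his}(β)) (δ_{rs} π_{hir}(β) − π_{hir}(β) π_{his}(β))`,
and hence the pseudo minimum phi-divergence estimator (a minimizer of
`d_φ(p̂, π(·))`) solves the system `u_φ(β) = 0` given by the vanishing of
these weighted sums. -/
theorem stmt8 {k d H : ℕ} (n : Fin H → ℕ)
    (y : (h : Fin H) → Fin (n h) → Fin (d + 1) → ℝ)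
    (x : (h : Fin H) → Fin (n h) → Fin k → ℝ)
    (w : (h : Fin H) → Fin (n h) → ℝ)
    (hw : ∀ h i, 0 < w h i) (hy : ∀ h i s, 0 < y h i s)
    (φ : ℝ → ℝ) (hφ : ∀ t > (0 : ℝ), DifferentiableAt ℝ φ t) :
    let m : (h : Fin H) → Fin (n h) → ℝ := fun h i => ∑ s, y h i s
    let τ : ℝ := ∑ h, ∑ i, w h i * m h i
    let dφ : (Fin d → Fin k → ℝ) → ℝ := fun β =>
      (1 / τ) * ∑ h, ∑ i, w h i * m h i *
        ∑ s, mlogit (x h i) β s * φ (y h i s / (m h i * mlogit (x h i) β s))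
    (∀ (β : Fin d → Fin k → ℝ) (l : Fin k) (r : Fin d),
      HasDerivAt
        (fun t : ℝ => dφ (Function.update β r (Function.update (β r) l t)))
        (-(1 / τ) * ∑ h, ∑ i, w h i * m h i * x h i l *
          ∑ s, fdiv φ (y h i s / m h i) (mlogit (x h i) β s) *
            ((if Fin.castSucc r = s then mlogit (x h i) β (Fin.castSucc r) else 0)
              - mlogit (x h i) β (Fin.castSucc r) * mlogit (x h i) β s))
        (β r l)) ∧
    (∀ β₀ : Fin d → Fin k → ℝ, (∀ β, dφ β₀ ≤ dφ β) →
      ∀ (l : Fin k) (r : Fin d),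
        ∑ h, ∑ i, w h i * m h i * x h i l *
          ∑ s, fdiv φ (y h i s / m h i) (mlogit (x h i) β₀ s) *
            ((if Fin.castSucc r = s then mlogit (x h i) β₀ (Fin.castSucc r) else 0)
              - mlogit (x h i) β₀ (Fin.castSucc r) * mlogit (x h i) β₀ s) = 0) := by
  have general := stmt8_general hy hφ x (isEmpty_or_weightedTotal_ne_zero hw hy)
  exact ⟨general.1, fun β₀ hmin => general.2 β₀ (.inl (.of_forall hmin))⟩
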